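/- arXiv:1506.06539 — 2 statements merged into one kernel-verified Lean document; each statement's English description precedes it below -/
import Mathlib

section
/- Fix c ∈ ℂ with c ≠ 0, N ≥ 1 and an index ℓ ∈ {1,…,N}. Let μ_1,…,μ_N and pairwise distinct λ_1,…,λ_N be complex numbers with μ_k ≠ λ_j and λ_m−λ_j±ic ≠ 0, and let λ_p, λ_s be admissible auxiliary parameters. Then det_N(δ_{jk}+U^{(1)}_{jk}) = −i(P_μ−P_λ)·det_N(E^ℓ), where P_λ = Σ_j λ_j, P_μ = Σ_j μ_j, and E^ℓ is the matrix with row ℓ equal to E^ℓ_{ℓk} = K(λ_p,λ_k)/(V⁺_ℓ−V⁻_ℓ) and E^ℓ_{jk} = δ_{jk} + [i/(V⁺_j−V⁻_j)]·Ξ_j·K(λ_j,λ_k) for j ≠ ℓ. -/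
open Complex Finset Matrix

namespace LL

noncomputable def Kk (c x y : ℂ) : ℂ := 2 * c / ((x - y) ^ 2 + c ^ 2)

noncomputable def Vp {N M : ℕ} (c : ℂ) (μ : Fin N → ℂ) (lam : Fin M → ℂ) (x : ℂ) : ℂ :=
  (∏ m, (μ m - x + I * c)) / ∏ m, (lam m - x + I * c)

noncomputable def Vm {N M : ℕ} (c : ℂ) (μ : Fin N → ℂ) (lam : Fin M → ℂ) (x : ℂ) : ℂ :=
  (∏ m, (μ m - x - I * c)) / ∏ m, (lam m - x - I * c)

noncomputable def Xi {N M : ℕ} (μ : Fin N → ℂ) (lam : Fin M → ℂ) (j : Fin M) : ℂ :=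
  (∏ m, (μ m - lam j)) / ∏ m ∈ Finset.univ.erase j, (lam m - lam j)

noncomputable def Umat {N M : ℕ} (c : ℂ) (μ : Fin N → ℂ) (lam : Fin M → ℂ) (lp ls : ℂ) :
    Matrix (Fin M) (Fin M) ℂ := fun j k =>
  I / (Vp c μ lam (lam j) - Vm c μ lam (lam j)) * Xi μ lam j *
    (Kk c (lam j) (lam k) - Kk c lp (lam k) * Kk c ls (lam j))

noncomputable def U1mat {N M : ℕ} (c : ℂ) (μ : Fin N → ℂ) (lam : Fin M → ℂ) (lp : ℂ) :
    Matrix (Fin M) (Fin M) ℂ := fun j k =>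
  I / (Vp c μ lam (lam j) - Vm c μ lam (lam j)) * Xi μ lam j *
    (Kk c (lam j) (lam k) - Kk c lp (lam k))

noncomputable def U2mat {N M : ℕ} (c : ℂ) (μ : Fin N → ℂ) (lam : Fin M → ℂ) (lp : ℂ) :
    Matrix (Fin M) (Fin M) ℂ := fun j k =>
  U1mat c μ lam lp j k + I / (Vp c μ lam (lam j) - Vm c μ lam (lam j)) * Kk c lp (lam k)

noncomputable def HR {N M : ℕ} (c sc : ℂ) (R : ℕ) (μ : Fin N → ℂ) (lam : Fin M → ℂ)
    (lp ls : ℂ) : ℂ :=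
  (I * sc) ^ R / (c ^ (2 * R - 1) * ((R - 1).factorial : ℂ)) * (-1 : ℂ) ^ (N * (R - 1)) *
    (∏ j, ∏ k, (lam j - lam k + I * c)) *
    (∏ j, ∏ k, (lam j - μ k)⁻¹) *
    (∏ j, (Vp c μ lam (lam j) - Vm c μ lam (lam j))) *
    (1 + Umat c μ lam lp ls).det /
    ((Vp c μ lam lp - Vm c μ lam lp) * (Vp c μ lam ls - Vm c μ lam ls))

noncomputable def Jcal {N : ℕ} (μ lam : Fin N → ℂ) : ℂ :=
  (∑ j, lam j - ∑ j, μ j) ^ 4 -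
    4 * (∑ j, lam j - ∑ j, μ j) * (∑ j, lam j ^ 3 - ∑ j, μ j ^ 3) +
    3 * (∑ j, lam j ^ 2 - ∑ j, μ j ^ 2) ^ 2

noncomputable def Fff {N : ℕ} (c : ℂ) (μ lam : Fin N → ℂ) (lp ls : ℂ) : ℂ :=
  (-1 : ℂ) ^ N * (Jcal μ lam / (6 * c)) *
    (∏ j, ∏ k, (lam j - lam k + I * c)) *
    (∏ j, ∏ k, (lam j - μ k)⁻¹) *
    (∏ j, (Vp c μ lam (lam j) - Vm c μ lam (lam j))) *
    (1 + Umat c μ lam lp ls).det /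
    ((Vp c μ lam lp - Vm c μ lam lp) * (Vp c μ lam ls - Vm c μ lam ls))

noncomputable def Tcal {N M : ℕ} (μ : Fin N → ℂ) (lam : Fin M → ℂ) : ℂ :=
  (1 / 2 : ℂ) * ((∑ j, lam j - ∑ j, μ j) ^ 2 - (∑ j, lam j ^ 2 - ∑ j, μ j ^ 2))

noncomputable def Gff {N M : ℕ} (c sc : ℂ) (μ : Fin N → ℂ) (lam : Fin M → ℂ) (lp ls : ℂ) : ℂ :=
  -I * (Tcal μ lam / (c * sc)) *
    (∏ j, ∏ k, (lam j - lam k + I * c)) *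
    (∏ j, ∏ k, (lam j - μ k)⁻¹) *
    (∏ j, (Vp c μ lam (lam j) - Vm c μ lam (lam j))) *
    (1 + Umat c μ lam lp ls).det /
    ((Vp c μ lam lp - Vm c μ lam lp) * (Vp c μ lam ls - Vm c μ lam ls))

noncomputable def fsc (c x y : ℂ) : ℂ := (x - y + I * c) / (x - y)

noncomputable def stringRap (cb : ℝ) (M : ℕ) (δ : Fin M → ℂ) (j : Fin M) : ℂ :=
  I * ((cb : ℂ) / 2) * ((M : ℂ) - 1 - 2 * (j.val : ℂ)) + I * δ j

end LL

open LL



lemma aux_Xi {N : ℕ} (μ lam : Fin N → ℂ) (j : Fin N) :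
    Xi μ lam j = - ((∏ m, (lam j - μ m)) / ∏ m ∈ Finset.univ.erase j, (lam j - lam m)) := by
  have h1 : ∏ m, (μ m - lam j) = (-1) ^ N * ∏ m, (lam j - μ m) := by
    have : ∀ m, μ m - lam j = (-1) * (lam j - μ m) := fun m => by ring
    simp_rw [this, Finset.prod_mul_distrib]
    simp
  have h2 : ∏ m ∈ Finset.univ.erase j, (lam m - lam j)
      = (-1) ^ (N - 1) * ∏ m ∈ Finset.univ.erase j, (lam j - lam m) := by
    have : ∀ m, lam m - lam j = (-1) * (lam j - lam m) := fun m => by ring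
    simp_rw [this, Finset.prod_mul_distrib]
    simp
  have hN : N = (N - 1) + 1 := by have := j.pos; omega
  have h3 : ((-1 : ℂ)) ^ N = (-1) ^ (N - 1) * (-1) := by
    rw [← pow_succ]; congr 1
  unfold Xi
  rw [h1, h2, h3, mul_assoc, mul_div_mul_left _ _ (by simp), neg_one_mul, neg_div]

lemma aux_deg {N : ℕ} (μ lam : Fin N → ℂ) :
    (Lagrange.nodal univ μ - Lagrange.nodal univ lam : Polynomial ℂ).degree
      < (#(univ : Finset (Fin N)) : ℕ) := by
  have := Polynomial.degree_sub_lt_left (p := Lagrange.nodal univ μ) (q := Lagrange.nodal univ lam)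
    (by rw [Lagrange.degree_nodal, Lagrange.degree_nodal]) Lagrange.nodal_ne_zero
    (by rw [Lagrange.nodal_monic.leadingCoeff, Lagrange.nodal_monic.leadingCoeff])
  rwa [Lagrange.degree_nodal] at this

lemma aux_eval {N : ℕ} (μ lam : Fin N → ℂ) (j : Fin N) :
    (Lagrange.nodal univ μ - Lagrange.nodal univ lam : Polynomial ℂ).eval (lam j)
      = ∏ m, (lam j - μ m) := by
  rw [Polynomial.eval_sub, Lagrange.eval_nodal_at_node (Finset.mem_univ j), Lagrange.eval_nodal,
    sub_zero]

lemma aux_sumXi {N : ℕ} (hN : 1 ≤ N) (μ lam : Fin N → ℂ) (hinj : Function.Injective lam) :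
    ∑ j, Xi μ lam j = ∑ j, μ j - ∑ j, lam j := by
  have h := Lagrange.coeff_eq_sum (s := univ) (v := lam) hinj.injOn (aux_deg μ lam)
  have hc : 0 < #(univ : Finset (Fin N)) := by rw [Finset.card_univ, Fintype.card_fin]; omega
  rw [Polynomial.coeff_sub, Lagrange.nodal_eq, Lagrange.nodal_eq,
    Polynomial.prod_X_sub_C_coeff_card_pred _ _ hc,
    Polynomial.prod_X_sub_C_coeff_card_pred _ _ hc] at h
  simp_rw [← Lagrange.nodal_eq, aux_eval] at h
  simp_rw [aux_Xi, Finset.sum_neg_distrib, ← h]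
  ring

lemma aux_pf {N : ℕ} (μ lam : Fin N → ℂ) (hinj : Function.Injective lam)
    (x : ℂ) (hx : ∀ j, x ≠ lam j) :
    (∏ m, (μ m - x)) / ∏ m, (lam m - x) = 1 + ∑ j, Xi μ lam j / (lam j - x) := by
  have h := congrArg (Polynomial.eval x) (Lagrange.eq_interpolate_of_eval_eq
    (s := univ) (v := lam) (r := fun j => ∏ m, (lam j - μ m)) hinj.injOn (aux_deg μ lam)
    (fun i _ => aux_eval μ lam i))
  rw [Lagrange.eval_interpolate_not_at_node _ (fun i _ => hx i), Polynomial.eval_sub,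
    Lagrange.eval_nodal, Lagrange.eval_nodal] at h
  have h0 : ∏ m, (x - lam m) ≠ 0 := Finset.prod_ne_zero_iff.2 fun m _ => sub_ne_zero.2 (hx m)
  have h1 : (∏ m, (μ m - x)) / ∏ m, (lam m - x) = (∏ m, (x - μ m)) / ∏ m, (x - lam m) := by
    rw [← Finset.prod_div_distrib, ← Finset.prod_div_distrib]
    refine Finset.prod_congr rfl fun m _ => ?_
    rw [← neg_sub, ← neg_sub x (lam m), neg_div_neg_eq]
  have h2 : ∑ i, Lagrange.nodalWeight univ lam i * (x - lam i)⁻¹ * ∏ m, (lam i - μ m)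
      = ∑ j, Xi μ lam j / (lam j - x) := by
    refine Finset.sum_congr rfl fun j _ => ?_
    rw [aux_Xi, Lagrange.nodalWeight, Finset.prod_inv_distrib, ← neg_sub x, neg_div_neg_eq]
    simp only [div_eq_mul_inv]
    ring
  rw [h2] at h
  rw [h1, div_eq_iff h0]
  linear_combination h

lemma aux_D {N : ℕ} (c : ℂ) (μ lam : Fin N → ℂ) (hinj : Function.Injective lam)
    (hpm : ∀ j k, lam j - lam k + I * c ≠ 0 ∧ lam j - lam k - I * c ≠ 0) (k : Fin N) :
    Vp c μ lam (lam k) - Vm c μ lam (lam k) = -I * ∑ j, Xi μ lam j * Kk c (lam j) (lam k) := by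
  have hp := aux_pf μ lam hinj (lam k - I * c) (fun j h => (hpm j k).1 (by rw [← h]; ring))
  have hm := aux_pf μ lam hinj (lam k + I * c) (fun j h => (hpm j k).2 (by rw [← h]; ring))
  have e1 : ∀ y : ℂ, y - (lam k - I * c) = y - lam k + I * c := fun y => by ring
  have e2 : ∀ y : ℂ, y - (lam k + I * c) = y - lam k - I * c := fun y => by ring
  simp_rw [e1] at hp
  simp_rw [e2] at hm
  unfold Vp Vm
  rw [hp, hm, add_sub_add_left_eq_sub, ← Finset.sum_sub_distrib, Finset.mul_sum]
  refine Finset.sum_congr rfl fun j _ => ?_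
  obtain ⟨ha, hb⟩ := hpm j k
  have : (lam j - lam k) ^ 2 + c ^ 2 = (lam j - lam k + I * c) * (lam j - lam k - I * c) := by
    ring_nf; rw [I_sq]; ring
  rw [Kk, this]
  field_simp
  ring

/-- Companion row-replacement identity: `det_N(δ+U^{(1)}) = −i(P_μ−P_λ)·det_N(E^ℓ)`, where
row `ℓ` of `E^ℓ` is `K(λ_p,λ_k)/(V⁺_ℓ−V⁻_ℓ)` and the other rows are those of
`δ_{jk} + (i/(V⁺_j−V⁻_j))·Ξ_j·K(λ_j,λ_k)`. -/
theorem det_U1_eq_momentum_det_E {N : ℕ} (hN : 1 ≤ N) (c : ℂ) (hc : c ≠ 0) (l : Fin N)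
    (μ lam : Fin N → ℂ) (hinj : Function.Injective lam)
    (hmulam : ∀ k j, μ k ≠ lam j)
    (hpm : ∀ j k, lam j - lam k + I * c ≠ 0 ∧ lam j - lam k - I * c ≠ 0)
    (lp ls : ℂ)
    (hp1 : ∀ j, (lp - lam j) ^ 2 + c ^ 2 ≠ 0)
    (hs1 : ∀ j, (ls - lam j) ^ 2 + c ^ 2 ≠ 0)
    (hV : ∀ j, Vp c μ lam (lam j) ≠ Vm c μ lam (lam j)) :
    (1 + U1mat c μ lam lp).det =
      -I * (∑ j, μ j - ∑ j, lam j) *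
        (Matrix.of fun j k : Fin N =>
          if j = l then
            Kk c lp (lam k) / (Vp c μ lam (lam l) - Vm c μ lam (lam l))
          else
            (if j = k then (1 : ℂ) else 0) +
              I / (Vp c μ lam (lam j) - Vm c μ lam (lam j)) * Xi μ lam j *
                Kk c (lam j) (lam k)).det := by
  have hD0 : ∀ j, Vp c μ lam (lam j) - Vm c μ lam (lam j) ≠ 0 := fun j => sub_ne_zero.2 (hV j)
  have hDs := aux_D c μ lam hinj hpm
  have hS := aux_sumXi hN μ lam hinj
  rw [← hS]
  have hM : ∀ j k, (1 + U1mat c μ lam lp) j k = (if j = k then (1 : ℂ) else 0) +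
      I / (Vp c μ lam (lam j) - Vm c μ lam (lam j)) * Xi μ lam j *
        (Kk c (lam j) (lam k) - Kk c lp (lam k)) := fun j k => by
    rw [Matrix.add_apply, Matrix.one_apply, U1mat]
  generalize (1 + U1mat c μ lam lp) = M at *
  generalize hDd : (fun j => Vp c μ lam (lam j) - Vm c μ lam (lam j)) = D at *
  have hDj : ∀ j, Vp c μ lam (lam j) - Vm c μ lam (lam j) = D j := fun j => congrFun hDd j
  simp_rw [hDj] at hD0 hDs hM ⊢
  generalize Xi μ lam = X at *
  set κ : Fin N → ℂ := fun k => Kk c lp (lam k) with hκ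
  have hrow : ∑ j, D j • M j = (-I * ∑ j, X j) • κ := by
    ext k
    have e : ∀ j, (D j • M j) k = (if j = k then D j else 0) + I * (X j * Kk c (lam j) (lam k))
        - I * X j * κ k := by
      intro j
      have := hD0 j
      simp only [hM, hκ, Pi.smul_apply, smul_eq_mul]
      split_ifs <;> field_simp <;> ring
    rw [Finset.sum_apply]
    simp_rw [e]
    rw [Finset.sum_sub_distrib, Finset.sum_add_distrib, ← Finset.mul_sum, ← Finset.sum_mul,
      ← Finset.mul_sum]
    simp only [Finset.sum_ite_eq', Finset.mem_univ, if_true, hDs k, Pi.smul_apply, smul_eq_mul]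
    ring
  have h1 := Matrix.det_updateRow_sum M l D
  rw [hrow, Matrix.det_updateRow_smul, smul_eq_mul] at h1
  set E : Matrix (Fin N) (Fin N) ℂ := Matrix.of fun j k : Fin N =>
    if j = l then Kk c lp (lam k) / D l
    else (if j = k then (1 : ℂ) else 0) + I / D j * X j * Kk c (lam j) (lam k) with hE
  have h2 : (Matrix.updateRow M l ((D l)⁻¹ • κ)).det = E.det := by
    refine Matrix.det_eq_of_forall_row_eq_smul_add_const
      (fun i => if i = l then 0 else - (I / D i * X i * D l)) l (by simp) ?_
    intro i j
    have := hD0 l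
    by_cases hi : i = l
    · subst hi
      simp [hE, hκ, div_eq_inv_mul]
    · simp only [Matrix.updateRow_ne hi, hE, hM, Matrix.of_apply, if_neg hi, if_true]
      field_simp
      ring
  rw [Matrix.det_updateRow_smul] at h2
  rw [← h2]
  have := hD0 l
  field_simp
  linear_combination -h1
end

section
/- Fix c̄ > 0, set c = −c̄, fix √c = i√c̄, integers R ≥ 1 and N ≥ 0, and set M = N+R. Let λ_j(δ) = i(c̄/2)(M+1−2j) + iδ_j for j = 1,…,M, and let μ_1,…,μ_N be fixed complex numbers with μ_m² + (c̄²/4)(M−1)² ≠ 0 for all m and μ_k ∉ {i(c̄/2)(M+1−2j) : j = 1,…,M}. Let λ_p, λ_s be fixed admissible auxiliary parameters. Then, as (δ_1,…,δ_M) → 0 in ℂ^M through values for which the expression is defined, H_R(μ_1,…,μ_N; λ_1(δ),…,λ_M(δ); λ_p,λ_s) → (−1)^{N+R}·(i√c)^R·c^{2N}·[(N+R)/(R−1)!]·[(N+R−1)!]² / ∏_{m=1}^{N}(μ_m² + (c̄²/4)(N+R−1)²). -/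
open Complex Finset Matrix

open LL

lemma pf {N M : ℕ} (hNM : N < M) (μ : Fin N → ℂ) (lam : Fin M → ℂ)
    (hinj : Function.Injective lam) (z : ℂ) (hz : ∀ j, lam j - z ≠ 0) :
    (∏ m, (μ m - z)) / ∏ m, (lam m - z) = ∑ j, Xi μ lam j / (lam j - z) := by
  have hp : ∏ m, (lam m - z) ≠ 0 := Finset.prod_ne_zero_iff.2 fun j _ => hz j
  set P : Polynomial ℂ := ∏ m : Fin N, (Polynomial.X + Polynomial.C (μ m)) with hP
  have hdeg : P.degree < (Finset.univ : Finset (Fin M)).card := by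
    have : P.degree = N := by
      rw [hP, Polynomial.degree_prod]; simp
    rw [this]; simpa using hNM
  have hv : Set.InjOn (fun j => - lam j) ((Finset.univ : Finset (Fin M)) : Set (Fin M)) := by
    intro a _ b _ h; exact hinj (by simpa using h)
  have h1 := Lagrange.eq_interpolate hv hdeg
  have h2 := Lagrange.eval_interpolate_not_at_node (s := Finset.univ) (v := fun j => - lam j)
    (x := -z) (fun i => P.eval (- lam i)) (fun i _ h => hz i (by linear_combination h))
  rw [← h1] at h2
  rw [Lagrange.eval_nodal] at h2
  have h3 : ∀ x, P.eval (-x) = ∏ m, (μ m - x) := by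
    intro x; rw [hP, Polynomial.eval_prod]; apply Finset.prod_congr rfl; intros; simp; ring
  rw [← h3, h2]
  have h4 : ∏ i, (-z - -lam i) = ∏ m, (lam m - z) := Finset.prod_congr rfl fun i _ => by ring
  rw [h4, mul_div_cancel_left₀ _ hp]
  apply Finset.sum_congr rfl
  intro i _
  rw [h3, Xi, Lagrange.nodalWeight, Finset.prod_inv_distrib]
  have : ∏ j ∈ Finset.univ.erase i, (-lam i - -lam j) = ∏ m ∈ Finset.univ.erase i, (lam m - lam i) :=
    Finset.prod_congr rfl fun i _ => by ring
  rw [this, show -z - -lam i = lam i - z by ring]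
  field_simp

lemma sumXK {N M : ℕ} (hNM : N < M) (c : ℂ) (μ : Fin N → ℂ) (lam : Fin M → ℂ)
    (hinj : Function.Injective lam) (x : ℂ) (hx : ∀ j, (x - lam j) ^ 2 + c ^ 2 ≠ 0) :
    ∑ j, Xi μ lam j * Kk c x (lam j) = I * (Vp c μ lam x - Vm c μ lam x) := by
  have hx' : ∀ j, (lam j - (x - I * c)) * (lam j - (x + I * c)) = (x - lam j) ^ 2 + c ^ 2 := by
    intro j; linear_combination (- c ^ 2) * I_sq
  have ha : ∀ j, lam j - (x - I * c) ≠ 0 := fun j h => hx j (by rw [← hx', h, zero_mul])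
  have hb : ∀ j, lam j - (x + I * c) ≠ 0 := fun j h => hx j (by rw [← hx', h, mul_zero])
  have h1 := pf hNM μ lam hinj _ ha
  have h2 := pf hNM μ lam hinj _ hb
  have e1 : Vp c μ lam x = ∑ j, Xi μ lam j / (lam j - (x - I * c)) := by
    rw [← h1, Vp]; congr 1 <;> exact Finset.prod_congr rfl fun i _ => by ring
  have e2 : Vm c μ lam x = ∑ j, Xi μ lam j / (lam j - (x + I * c)) := by
    rw [← h2, Vm]; congr 1 <;> exact Finset.prod_congr rfl fun i _ => by ring
  rw [e1, e2, ← Finset.sum_sub_distrib, Finset.mul_sum]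
  apply Finset.sum_congr rfl
  intro j _
  rw [Kk, ← hx' j]
  rw [div_sub_div _ _ (ha j) (hb j), ← mul_div_assoc, ← mul_div_assoc]
  congr 1
  linear_combination (2 * c * Xi μ lam j) * I_sq

lemma det_rank {n : ℕ} (G : Matrix (Fin (n + 1)) (Fin (n + 1)) ℂ) (a b : Fin (n + 1) → ℂ)
    (h1 : ∀ k, G (Fin.last n) k = 0) (h2 : ∀ k, G k (Fin.last n) = 0) :
    (G + Matrix.of fun j k => a j * b k).det =
      a (Fin.last n) * b (Fin.last n) * (G.submatrix Fin.castSucc Fin.castSucc).det := by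
  let e : Fin n ⊕ Fin 1 ≃ Fin (n + 1) := finSumFinEquiv
  have el : ∀ i, e (Sum.inl i) = Fin.castSucc i := fun i => rfl
  have er : ∀ i, e (Sum.inr i) = Fin.last n := fun i => by
    ext; simp [e]
  set G' := G.submatrix Fin.castSucc Fin.castSucc with hG'
  have key : (G + Matrix.of fun j k => a j * b k).submatrix e e =
      Matrix.fromBlocks 1 (Matrix.of fun i (_ : Fin 1) => a (Fin.castSucc i)) 0
        (Matrix.of fun _ _ => a (Fin.last n)) *
      (Matrix.fromBlocks G' 0 0 1 *
       Matrix.fromBlocks 1 0 (Matrix.of fun (_ : Fin 1) i => b (Fin.castSucc i))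
        (Matrix.of fun _ _ => b (Fin.last n))) := by
    rw [Matrix.fromBlocks_multiply, Matrix.fromBlocks_multiply]
    ext i j
    rcases i with i | i <;> rcases j with j | j <;>
      simp [el, er, h1, h2, Matrix.mul_apply, hG']
  rw [← Matrix.det_submatrix_equiv_self e, key, Matrix.det_mul, Matrix.det_mul,
    Matrix.det_fromBlocks_zero₂₁, Matrix.det_fromBlocks_zero₁₂, Matrix.det_fromBlocks_zero₁₂]
  simp
  ring

noncomputable def TT (n : ℕ) : Matrix (Fin n) (Fin n) ℂ := fun a j => if j ≤ a then 1 else 0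

lemma det_TT (n : ℕ) : (TT n).det = 1 := by
  rw [Matrix.det_of_isLowerTriangular]
  · simp [TT]
  · intro i j h
    have h' : i < j := by simpa using h
    simp [TT, not_le.2 h']

lemma TT_apply {n : ℕ} (C : Matrix (Fin n) (Fin n) ℂ) (a b : Fin n) :
    (TT n * C * (TT n)ᵀ) a b = ∑ j, ∑ k, if j ≤ a ∧ k ≤ b then C j k else 0 := by
  rw [Matrix.mul_assoc, Matrix.mul_apply]
  apply Finset.sum_congr rfl; intro j _
  rw [Matrix.mul_apply, Finset.mul_sum]
  apply Finset.sum_congr rfl; intro k _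
  simp only [TT, Matrix.transpose_apply]
  split_ifs <;> simp_all

/-- cut form -/
lemma cut_form {n : ℕ} (C : Matrix (Fin n) (Fin n) ℂ) (hs : ∀ j k, C j k = C k j)
    (h0 : ∀ j, ∑ k, C j k = 0) (a b : Fin n) :
    (∑ j, ∑ k, if j ≤ a ∧ k ≤ b then C j k else 0) =
      - ∑ j, ∑ k, if j ≤ min a b ∧ max a b < k then C j k else 0 := by
  have main : ∀ a b : Fin n, a ≤ b → (∑ j, ∑ k, if j ≤ a ∧ k ≤ b then C j k else 0) =
      - ∑ j, ∑ k, if j ≤ min a b ∧ max a b < k then C j k else 0 := by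
    intro a b hab
    rw [min_eq_left hab, max_eq_right hab, eq_neg_iff_add_eq_zero, ← Finset.sum_add_distrib]
    apply Finset.sum_eq_zero
    intro j _
    rw [← Finset.sum_add_distrib]
    by_cases hj : j ≤ a
    · refine Eq.trans ?_ (h0 j)
      apply Finset.sum_congr rfl
      intro k _
      by_cases hk : k ≤ b
      · simp [hj, hk, not_lt.2 hk]
      · simp [hj, hk, not_le.1 hk]
    · simp [hj]
  rcases le_total a b with h | h
  · exact main a b h
  · rw [min_comm, max_comm, ← main b a h, Finset.sum_comm]
    refine Finset.sum_congr rfl fun j _ => Finset.sum_congr rfl fun k _ => ?_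
    rw [hs k j]; simp [and_comm]

/-- the exact algebraic reduction -/
lemma det_exact {n : ℕ} (C : Matrix (Fin (n + 1)) (Fin (n + 1)) ℂ) (hs : ∀ j k, C j k = C k j)
    (h0 : ∀ j, ∑ k, C j k = 0) (u v : Fin (n + 1) → ℂ) :
    (C + Matrix.of fun j k => u j * v k).det = (∑ j, u j) * (∑ j, v j) *
      (Matrix.of fun a b : Fin n => - ∑ j, ∑ k,
        if j ≤ min a.castSucc b.castSucc ∧ max a.castSucc b.castSucc < k then C j k else 0).det := by
  have hT : (C + Matrix.of fun j k => u j * v k).det =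
      (TT (n+1) * (C + Matrix.of fun j k => u j * v k) * (TT (n+1))ᵀ).det := by
    rw [Matrix.det_mul, Matrix.det_mul, Matrix.det_transpose, det_TT]; ring
  have hsplit : TT (n+1) * (C + Matrix.of fun j k => u j * v k) * (TT (n+1))ᵀ =
      TT (n+1) * C * (TT (n+1))ᵀ + Matrix.of fun a b =>
        (∑ j, if j ≤ a then u j else 0) * (∑ j, if j ≤ b then v j else 0) := by
    rw [Matrix.mul_add, Matrix.add_mul]
    congr 1
    ext a b
    rw [TT_apply, Matrix.of_apply, Finset.sum_mul_sum]
    refine Finset.sum_congr rfl fun j _ => Finset.sum_congr rfl fun k _ => ?_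
    simp only [Matrix.of_apply]
    split_ifs <;> simp_all
  have hl : ∀ x : Fin (n+1), ¬ Fin.last n < x := fun x => not_lt.2 (Fin.le_last x)
  rw [hT, hsplit, det_rank]
  · congr 1
    · simp [Fin.le_last]
    · congr 1
      ext a b
      rw [Matrix.submatrix_apply, TT_apply, cut_form C hs h0]; rfl
  · intro k
    rw [TT_apply, cut_form C hs h0]
    simp [max_eq_left (Fin.le_last k), hl]
  · intro k
    rw [TT_apply, cut_form C hs h0]
    simp [max_eq_right (Fin.le_last k), hl]

noncomputable def Dcut {N n : ℕ} (c : ℂ) (μ : Fin N → ℂ) (lam : Fin (n + 1) → ℂ) :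
    Matrix (Fin n) (Fin n) ℂ :=
  Matrix.of fun a b => (lam a.castSucc - lam a.succ + I * c) * - ∑ j, ∑ k,
    if j ≤ min a.castSucc b.castSucc ∧ max a.castSucc b.castSucc < k then
      I * (Xi μ lam j * Xi μ lam k * Kk c (lam j) (lam k)) else 0

noncomputable def Rest {n : ℕ} (c : ℂ) (lam : Fin (n + 1) → ℂ) : ℂ :=
  ∏ j : Fin (n + 1), ∏ k : Fin (n + 1),
    if k.val = j.val + 1 then 1 else (lam j - lam k + I * c)

lemma rest_eq {n : ℕ} (c : ℂ) (lam : Fin (n + 1) → ℂ) :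
    ∏ j, ∏ k, (lam j - lam k + I * c) =
      (∏ a : Fin n, (lam a.castSucc - lam a.succ + I * c)) * Rest c lam := by
  have h1 : ∏ j : Fin (n + 1), ∏ k : Fin (n + 1),
      (if k.val = j.val + 1 then (lam j - lam k + I * c) else 1) =
      (∏ a : Fin n, (lam a.castSucc - lam a.succ + I * c)) := by
    rw [Fin.prod_univ_castSucc]
    have : ∏ k : Fin (n + 1), (if k.val = (Fin.last n).val + 1 then
        (lam (Fin.last n) - lam k + I * c) else 1) = 1 := by
      apply Finset.prod_eq_one
      intro k _
      rw [if_neg]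
      simp; omega
    rw [this, mul_one]
    apply Finset.prod_congr rfl
    intro a _
    rw [Finset.prod_eq_single a.succ]
    · simp
    · intro b _ hb
      rw [if_neg]
      intro h; apply hb; ext; simpa using h
    · simp
  rw [← h1, Rest, ← Finset.prod_mul_distrib]
  refine Finset.prod_congr rfl fun j _ => ?_
  rw [← Finset.prod_mul_distrib]
  refine Finset.prod_congr rfl fun k _ => ?_
  split_ifs <;> simp

lemma Kk_comm (c x y : ℂ) : Kk c x y = Kk c y x := by
  unfold Kk; congr 2; ring

lemma exactH {N n : ℕ} (hNn : N < n + 1) (c sc : ℂ) (R : ℕ) (μ : Fin N → ℂ)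
    (lam : Fin (n + 1) → ℂ) (lp ls : ℂ)
    (hinj : Function.Injective lam) (hmu : ∀ k j, μ k ≠ lam j)
    (hd : ∀ j k, lam j - lam k + I * c ≠ 0 ∧ lam j - lam k - I * c ≠ 0)
    (hF : ∀ j, Vp c μ lam (lam j) ≠ Vm c μ lam (lam j))
    (hFp : Vp c μ lam lp ≠ Vm c μ lam lp) (hFs : Vp c μ lam ls ≠ Vm c μ lam ls)
    (hp : ∀ j, (lp - lam j) ^ 2 + c ^ 2 ≠ 0) (hs : ∀ j, (ls - lam j) ^ 2 + c ^ 2 ≠ 0) :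
    HR c sc R μ lam lp ls =
      (I * sc) ^ R / (c ^ (2 * R - 1) * ((R - 1).factorial : ℂ)) * (-1 : ℂ) ^ (N * (R - 1)) *
      Rest c lam * (∏ j, ∏ k, (lam j - μ k)⁻¹) * (I * (Dcut c μ lam).det / ∏ j, Xi μ lam j) := by
  have hX : ∀ j, Xi μ lam j ≠ 0 := by
    intro j
    apply div_ne_zero <;> rw [Finset.prod_ne_zero_iff] <;> intro m hm
    · exact sub_ne_zero.2 (hmu m j)
    · exact sub_ne_zero.2 (fun h => (Finset.mem_erase.1 hm).1 (hinj h))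
  have hXp : ∏ j, Xi μ lam j ≠ 0 := Finset.prod_ne_zero_iff.2 fun j _ => hX j
  have hK : ∀ j k, (lam j - lam k) ^ 2 + c ^ 2 ≠ 0 := by
    intro j k h
    have : (lam j - lam k + I * c) * (lam j - lam k - I * c) = 0 := by
      rw [← h]; linear_combination (- c ^ 2) * I_sq
    rcases mul_eq_zero.1 this with h | h
    · exact (hd j k).1 h
    · exact (hd j k).2 h
  set F : Fin (n + 1) → ℂ := fun j => Vp c μ lam (lam j) - Vm c μ lam (lam j) with hFdef
  have hF' : ∀ j, F j ≠ 0 := fun j => sub_ne_zero.2 (hF j)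
  set C : Matrix (Fin (n + 1)) (Fin (n + 1)) ℂ := Matrix.of fun j k =>
    (if j = k then F j * Xi μ lam j else 0) + I * (Xi μ lam j * Xi μ lam k * Kk c (lam j) (lam k))
    with hC
  have hCs : ∀ j k, C j k = C k j := by
    intro j k
    simp only [hC, Matrix.of_apply]
    rw [Kk_comm c (lam k)]
    by_cases h : j = k
    · subst h; rfl
    · rw [if_neg h, if_neg (Ne.symm h)]; ring
  have hC0 : ∀ j, ∑ k, C j k = 0 := by
    intro j
    simp only [hC, Matrix.of_apply]
    rw [Finset.sum_add_distrib]
    simp only [Finset.sum_ite_eq, Finset.mem_univ, if_true]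
    have := sumXK hNn c μ lam hinj (lam j) (hK j)
    have h2 : ∑ k, I * (Xi μ lam j * Xi μ lam k * Kk c (lam j) (lam k)) =
        I * Xi μ lam j * ∑ k, Xi μ lam k * Kk c (lam j) (lam k) := by
      rw [Finset.mul_sum]; exact Finset.sum_congr rfl fun k _ => by ring
    rw [h2, this]
    simp only [hFdef]
    linear_combination (Xi μ lam j * (Vp c μ lam (lam j) - Vm c μ lam (lam j))) * I_sq
  have hdet := det_exact C hCs hC0 (fun j => -I * (Xi μ lam j * Kk c ls (lam j)))
    (fun k => Xi μ lam k * Kk c lp (lam k))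
  rw [← Finset.mul_sum, sumXK hNn c μ lam hinj ls hs, sumXK hNn c μ lam hinj lp hp] at hdet
  have hmat : (C + Matrix.of fun j k => -I * (Xi μ lam j * Kk c ls (lam j)) *
      (Xi μ lam k * Kk c lp (lam k))) =
      Matrix.diagonal F * (1 + Umat c μ lam lp ls) * Matrix.diagonal (Xi μ lam) := by
    ext j k
    rw [Matrix.mul_diagonal, Matrix.diagonal_mul]
    simp only [hC, Matrix.of_apply, Matrix.add_apply, Matrix.one_apply, Umat]
    change _ = F j * (_ + I / F j * _ * _) * _
    have := hF' j
    by_cases h : j = k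
    · subst h; simp only [if_true]; field_simp; ring
    · simp only [if_neg h]; field_simp; ring
  rw [hmat, Matrix.det_mul, Matrix.det_mul, Matrix.det_diagonal, Matrix.det_diagonal] at hdet
  have hD : (Dcut c μ lam).det = (∏ a : Fin n, (lam a.castSucc - lam a.succ + I * c)) *
      (Matrix.of fun a b : Fin n => - ∑ j, ∑ k,
        if j ≤ min a.castSucc b.castSucc ∧ max a.castSucc b.castSucc < k then C j k else 0).det := by
    rw [← Matrix.det_diagonal, ← Matrix.det_mul]
    congr 1
    ext a b
    rw [Matrix.diagonal_mul, Dcut, Matrix.of_apply, Matrix.of_apply]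
    congr 2
    refine Finset.sum_congr rfl fun j _ => Finset.sum_congr rfl fun k _ => ?_
    split_ifs with h
    · have : j ≠ k := by
        rintro rfl
        exact absurd (h.1.trans (min_le_max.trans h.2.le)) (by
          intro _; exact absurd (lt_of_le_of_lt (h.1.trans min_le_max) h.2) (lt_irrefl _))
      simp [hC, this]
    · rfl
  rw [HR, rest_eq, hD]
  set d := (Matrix.of fun a b : Fin n => - ∑ j, ∑ k,
        if j ≤ min a.castSucc b.castSucc ∧ max a.castSucc b.castSucc < k then C j k else 0).det
  set p := Vp c μ lam lp - Vm c μ lam lp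
  set s := Vp c μ lam ls - Vm c μ lam ls
  have hp0 : p ≠ 0 := sub_ne_zero.2 hFp
  have hs0 : s ≠ 0 := sub_ne_zero.2 hFs
  have h3 : (∏ j, F j) * (1 + Umat c μ lam lp ls).det / (p * s) = I * d / ∏ j, Xi μ lam j := by
    rw [div_eq_div_iff (mul_ne_zero hp0 hs0) hXp, hdet]
    linear_combination (-I * s * p * d) * I_sq
  change _ * (∏ j, F j) * _ / _ = _
  rw [mul_assoc _ (∏ j, F j), mul_div_assoc, h3]
  ring

lemma tendsto_Xi {α : Type*} {l : Filter α} {N M : ℕ} (μ : Fin N → ℂ) (lam : α → Fin M → ℂ)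
    (lam0 : Fin M → ℂ) (hinj : Function.Injective lam0)
    (hl : ∀ j, Filter.Tendsto (fun x => lam x j) l (nhds (lam0 j))) (j : Fin M) :
    Filter.Tendsto (fun x => Xi μ (lam x) j) l (nhds (Xi μ lam0 j)) := by
  unfold Xi
  refine Filter.Tendsto.div ?_ ?_ ?_
  · exact tendsto_finsetProd _ fun m _ => tendsto_const_nhds.sub (hl j)
  · exact tendsto_finsetProd _ fun m _ => (hl m).sub (hl j)
  · rw [Finset.prod_ne_zero_iff]
    intro m hm
    exact sub_ne_zero.2 (fun h => (Finset.mem_erase.1 hm).1 (hinj h))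

lemma tendsto_Dcut {α : Type*} {l : Filter α} {N n : ℕ} (c : ℂ) (hc : c ≠ 0) (μ : Fin N → ℂ)
    (lam : α → Fin (n + 1) → ℂ)
    (lam0 : Fin (n + 1) → ℂ) (hinj : Function.Injective lam0)
    (hl0 : ∀ j k, lam0 j - lam0 k = I * c * ((j.val : ℂ) - (k.val : ℂ)))
    (hl : ∀ j, Filter.Tendsto (fun x => lam x j) l (nhds (lam0 j)))
    (hne : ∀ᶠ x in l, ∀ j k, lam x j - lam x k + I * c ≠ 0 ∧ lam x j - lam x k - I * c ≠ 0) :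
    Filter.Tendsto (fun x => (Dcut c μ (lam x)).det) l
      (nhds (∏ a : Fin n, Xi μ lam0 a.castSucc * Xi μ lam0 a.succ)) := by
  have hXi := tendsto_Xi μ lam lam0 hinj hl
  have heps : ∀ a : Fin n, Filter.Tendsto
      (fun x => lam x a.castSucc - lam x a.succ + I * c) l (nhds 0) := by
    intro a
    have := ((hl a.castSucc).sub (hl a.succ)).add_const (I * c)
    rw [hl0] at this
    convert this using 2
    simp
  rw [← Matrix.det_diagonal]
  refine (continuous_id.matrix_det.tendsto _).comp ?_
  refine tendsto_pi_nhds.2 fun a => tendsto_pi_nhds.2 fun b => ?_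
  -- termwise limit
  have hterm : ∀ j k : Fin (n + 1), Filter.Tendsto
      (fun x => (lam x a.castSucc - lam x a.succ + I * c) *
        (if j ≤ min a.castSucc b.castSucc ∧ max a.castSucc b.castSucc < k then
      I * (Xi μ (lam x) j * Xi μ (lam x) k * Kk c (lam x j) (lam x k)) else 0)) l
      (nhds (if a = b then (if j = a.castSucc then (if k = a.succ then
        -(Xi μ lam0 a.castSucc * Xi μ lam0 a.succ) else 0) else 0) else 0)) := by
    intro j k
    by_cases h : j ≤ min a.castSucc b.castSucc ∧ max a.castSucc b.castSucc < k
    · simp only [if_pos h]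
      have h1 := h.1
      have h2 := h.2
      rw [le_min_iff] at h1
      rw [max_lt_iff] at h2
      have e1 : j.val ≤ a.val := h1.1
      have e2 : j.val ≤ b.val := h1.2
      have e3 : a.val < k.val := h2.1
      have e4 : b.val < k.val := h2.2
      by_cases hk : k.val = j.val + 1
      · have hab : a = b := by ext; omega
        have hj : j = a.castSucc := by ext; simp; omega
        have hk' : k = a.succ := by ext; simp; omega
        rw [if_pos hab, if_pos hj, if_pos hk', ← hj, ← hk']
        have hlim : Filter.Tendsto (fun x => I * (Xi μ (lam x) j * Xi μ (lam x) k) *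
            (2 * c / (lam x j - lam x k - I * c))) l
            (nhds (I * (Xi μ lam0 j * Xi μ lam0 k) * (2 * c / (lam0 j - lam0 k - I * c)))) := by
          have hh : lam0 j - lam0 k - I * c = -2 * I * c := by
            rw [hl0, hk]; push_cast; ring
          refine (((hXi j).mul (hXi k)).const_mul I).mul ?_
          refine tendsto_const_nhds.div (((hl j).sub (hl k)).sub_const _) ?_
          rw [hh]
          simp [hc]
        have hval : I * (Xi μ lam0 j * Xi μ lam0 k) * (2 * c / (lam0 j - lam0 k - I * c)) =
            -(Xi μ lam0 j * Xi μ lam0 k) := by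
          have hh : lam0 j - lam0 k - I * c = -2 * I * c := by
            rw [hl0, hk]; push_cast; ring
          rw [hh]
          have := I_ne_zero
          field_simp
        rw [hval] at hlim
        refine hlim.congr' ?_
        filter_upwards [hne] with x hx
        obtain ⟨n1, n2⟩ := hx j k
        have : (lam x j - lam x k) ^ 2 + c ^ 2 =
            (lam x j - lam x k + I * c) * (lam x j - lam x k - I * c) := by
          linear_combination (c ^ 2) * I_sq
        rw [Kk, this]
        field_simp
      · have h0 : (if a = b then (if j = a.castSucc then (if k = a.succ then
          -(Xi μ lam0 a.castSucc * Xi μ lam0 a.succ) else 0) else 0) else 0) = 0 := by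
          split_ifs with g1 g2 g3
          · exfalso; apply hk; rw [g2, g3]; simp
          all_goals rfl
        rw [h0]
        have hK : Filter.Tendsto (fun x => Kk c (lam x j) (lam x k)) l
            (nhds (Kk c (lam0 j) (lam0 k))) := by
          unfold Kk
          refine tendsto_const_nhds.div ((((hl j).sub (hl k)).pow 2).add_const _) ?_
          rw [hl0]
          have : (I * c * ((j.val : ℂ) - (k.val : ℂ))) ^ 2 + c ^ 2 =
              c ^ 2 * ((j.val + 1 - k.val : ℂ) * (k.val + 1 - j.val : ℂ)) := by
            linear_combination (c ^ 2 * ((j.val : ℂ) - (k.val : ℂ)) ^ 2) * I_sq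
          rw [this]
          refine mul_ne_zero (pow_ne_zero 2 hc) (mul_ne_zero ?_ ?_)
          · rw [sub_ne_zero]; intro hh; exact hk (by exact_mod_cast hh.symm)
          · rw [sub_ne_zero]; intro hh
            have : k.val + 1 = j.val := by exact_mod_cast hh
            omega
        have := (heps a).mul ((((hXi j).mul (hXi k)).mul hK).const_mul I)
        rwa [zero_mul] at this
    · simp only [if_neg h, mul_zero]
      have h0 : (if a = b then (if j = a.castSucc then (if k = a.succ then
          -(Xi μ lam0 a.castSucc * Xi μ lam0 a.succ) else 0) else 0) else 0) = 0 := by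
          split_ifs with g1 g2 g3
          · exfalso; apply h; subst g1; subst g2; subst g3; simp
          all_goals rfl
      rw [h0]; exact tendsto_const_nhds
  have hsum := (tendsto_finsetSum Finset.univ fun j _ =>
    tendsto_finsetSum Finset.univ fun k _ => hterm j k).neg
  convert hsum using 2
  · simp only [Dcut, id, Matrix.of_apply, mul_neg, Finset.mul_sum]
  · by_cases hab : a = b
    · subst hab; simp
    · simp [hab]

lemma prod_erase_ite {M : ℕ} (f : Fin M → ℂ) (j : Fin M) :
    ∏ m ∈ Finset.univ.erase j, f m = ∏ m, if m.val = j.val then 1 else f m := by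
  rw [← Finset.mul_prod_erase Finset.univ _ (Finset.mem_univ j), if_pos rfl, one_mul]
  refine Finset.prod_congr rfl fun m hm => ?_
  rw [if_neg]
  intro h; exact (Finset.mem_erase.1 hm).1 (Fin.ext h)

lemma fact_prod (n : ℕ) (x : ℂ) : ∏ k : Fin n, x * ((k.val : ℂ) + 1) = x ^ n * (n.factorial : ℂ) := by
  rw [Finset.prod_mul_distrib]
  simp only [Finset.prod_const, Finset.card_univ, Fintype.card_fin]
  congr 1
  rw [Fin.prod_univ_eq_prod_range (fun k : ℕ => (k : ℂ) + 1) n, ← Finset.prod_range_add_one_eq_factorial]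
  push_cast; rfl

lemma fact_prod_rev (n : ℕ) (x : ℂ) :
    ∏ k : Fin n, x * ((n : ℂ) - (k.val : ℂ)) = x ^ n * (n.factorial : ℂ) := by
  rw [← fact_prod, ← Equiv.prod_comp Fin.revPerm]
  refine Finset.prod_congr rfl fun k _ => ?_
  simp only [Fin.revPerm_apply, Fin.val_rev]
  rw [Nat.cast_sub (by omega)]
  push_cast; ring

lemma const_rest {n : ℕ} (c : ℂ) (hc : c ≠ 0) (lam0 : Fin (n + 1) → ℂ)
    (hl0 : ∀ j k, lam0 j - lam0 k = I * c * ((j.val : ℂ) - (k.val : ℂ))) :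
    Rest c lam0 = I * c * (n + 1) * (-1) ^ n *
      ∏ j, ∏ m ∈ Finset.univ.erase j, (lam0 m - lam0 j) := by
  set E : ℕ → ℂ := fun i => ∏ k : Fin (n + 1), if k.val = i then 1 else I * c * ((i : ℂ) - k.val)
    with hE
  have h1 : Rest c lam0 = ∏ i ∈ Finset.range (n + 1), E (i + 1) := by
    rw [← Fin.prod_univ_eq_prod_range (fun i => E (i + 1)), Rest]
    refine Finset.prod_congr rfl fun j _ => Finset.prod_congr rfl fun k _ => ?_
    split_ifs
    · rfl
    · rw [hl0]; push_cast; ring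
  have h2 : ∏ j, ∏ m ∈ Finset.univ.erase j, (lam0 m - lam0 j) =
      ∏ i ∈ Finset.range (n + 1), E i := by
    rw [← Fin.prod_univ_eq_prod_range (fun i => E i)]
    simp only [prod_erase_ite, hE]
    rw [Finset.prod_comm]
    refine Finset.prod_congr rfl fun j _ => Finset.prod_congr rfl fun k _ => ?_
    rw [hl0]
    simp only [eq_comm]
  have h3 : (∏ i ∈ Finset.range (n + 1), E (i + 1)) * E 0 =
      (∏ i ∈ Finset.range (n + 1), E i) * E (n + 1) := by
    rw [← Finset.prod_range_succ', ← Finset.prod_range_succ]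
  have hE0 : E 0 = (-(I * c)) ^ n * (n.factorial : ℂ) := by
    rw [← fact_prod, hE]
    simp only
    rw [Fin.prod_univ_succ]
    simp
    refine Finset.prod_congr rfl fun k _ => ?_
    ring
  have hEn : E (n + 1) = (I * c) ^ (n + 1) * ((n + 1).factorial : ℂ) := by
    rw [← fact_prod_rev, hE]
    refine Finset.prod_congr rfl fun k _ => ?_
    rw [if_neg (by omega)]
  have hE0' : E 0 ≠ 0 := by
    rw [hE0]
    exact mul_ne_zero (pow_ne_zero _ (neg_ne_zero.2 (mul_ne_zero I_ne_zero hc)))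
      (by exact_mod_cast n.factorial_ne_zero)
  rw [h1, h2]
  apply mul_right_cancel₀ hE0'
  rw [h3, hE0, hEn, Nat.factorial_succ, neg_pow (I * c)]
  have : ((-1 : ℂ) ^ n) * (-1) ^ n = 1 := by rw [← mul_pow]; simp
  push_cast
  linear_combination (-(∏ i ∈ Finset.range (n + 1), E i) * (I * c) ^ (n + 1) * (n + 1) *
    n.factorial) * this

lemma const_eval {N n R : ℕ} (hR : 1 ≤ R) (hNR : N + R = n + 1) (c : ℂ) (hc : c ≠ 0)
    (μ : Fin N → ℂ) (lam0 : Fin (n + 1) → ℂ) (hinj : Function.Injective lam0)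
    (hl0 : ∀ j k, lam0 j - lam0 k = I * c * ((j.val : ℂ) - (k.val : ℂ)))
    (hmu : ∀ k j, μ k ≠ lam0 j) (sc : ℂ) :
    (I * sc) ^ R / (c ^ (2 * R - 1) * ((R - 1).factorial : ℂ)) * (-1 : ℂ) ^ (N * (R - 1)) *
      Rest c lam0 * (∏ j, ∏ k, (lam0 j - μ k)⁻¹) *
      (I * (∏ a : Fin n, Xi μ lam0 a.castSucc * Xi μ lam0 a.succ) / ∏ j, Xi μ lam0 j) =
    (-1 : ℂ) ^ (n + 1) * (I * sc) ^ R * c ^ (2 * N) *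
        (((n : ℂ) + 1) / ((R - 1).factorial : ℂ)) * ((n.factorial : ℂ)) ^ 2 /
        ∏ m : Fin N, ((μ m - lam0 0) * (μ m - lam0 (Fin.last n))) := by
  have hX : ∀ j, Xi μ lam0 j ≠ 0 := by
    intro j
    apply div_ne_zero <;> rw [Finset.prod_ne_zero_iff] <;> intro m hm
    · exact sub_ne_zero.2 (hmu m j)
    · exact sub_ne_zero.2 (fun h => (Finset.mem_erase.1 hm).1 (hinj h))
  have hXp : ∏ j, Xi μ lam0 j ≠ 0 := Finset.prod_ne_zero_iff.2 fun j _ => hX j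
  have h1 : (∏ a : Fin n, Xi μ lam0 a.castSucc * Xi μ lam0 a.succ) / ∏ j, Xi μ lam0 j =
      (∏ j, Xi μ lam0 j) / (Xi μ lam0 0 * Xi μ lam0 (Fin.last n)) := by
    rw [div_eq_div_iff hXp (mul_ne_zero (hX _) (hX _)), Finset.prod_mul_distrib]
    nth_rewrite 1 [Fin.prod_univ_castSucc (Xi μ lam0)]
    rw [Fin.prod_univ_succ (Xi μ lam0)]
    ring
  have hD : ∀ j, ∏ m ∈ Finset.univ.erase j, (lam0 m - lam0 j) ≠ 0 := by
    intro j
    rw [Finset.prod_ne_zero_iff]; intro m hm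
    exact sub_ne_zero.2 (fun h => (Finset.mem_erase.1 hm).1 (hinj h))
  have hP : ∀ j, ∏ m, (μ m - lam0 j) ≠ 0 := by
    intro j
    rw [Finset.prod_ne_zero_iff]; intro m hm
    exact sub_ne_zero.2 (hmu m j)
  have hDp : ∏ j, ∏ m ∈ Finset.univ.erase j, (lam0 m - lam0 j) ≠ 0 :=
    Finset.prod_ne_zero_iff.2 fun j _ => hD j
  have hPp : ∏ j, ∏ m, (μ m - lam0 j) ≠ 0 := Finset.prod_ne_zero_iff.2 fun j _ => hP j
  have h2 : ∏ j, Xi μ lam0 j = (∏ j, ∏ m, (μ m - lam0 j)) /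
      ∏ j, ∏ m ∈ Finset.univ.erase j, (lam0 m - lam0 j) := by
    simp only [Xi]; rw [Finset.prod_div_distrib]
  have h3 : ∏ j, ∏ k, (lam0 j - μ k)⁻¹ = (-1) ^ (N * (n + 1)) / ∏ j, ∏ m, (μ m - lam0 j) := by
    have : ∀ j k, (lam0 j - μ k)⁻¹ = (-1) * (μ k - lam0 j)⁻¹ := by
      intro j k
      rw [← neg_sub (μ k) (lam0 j), inv_neg]; ring
    simp only [this, Finset.prod_mul_distrib, Finset.prod_inv_distrib, Finset.prod_const,
      Finset.card_univ, Fintype.card_fin, ← pow_mul]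
    rw [div_eq_mul_inv]
  have hD0 : ∏ m ∈ Finset.univ.erase (0 : Fin (n + 1)), (lam0 m - lam0 0) =
      (I * c) ^ n * (n.factorial : ℂ) := by
    rw [prod_erase_ite, Fin.prod_univ_succ, ← fact_prod]
    simp [hl0]
  have hDn : ∏ m ∈ Finset.univ.erase (Fin.last n), (lam0 m - lam0 (Fin.last n)) =
      (-(I * c)) ^ n * (n.factorial : ℂ) := by
    rw [prod_erase_ite, Fin.prod_univ_castSucc, ← fact_prod_rev, if_pos rfl, mul_one]
    refine Finset.prod_congr rfl fun k _ => ?_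
    rw [if_neg (by simp; omega), hl0]
    simp; ring
  have hX0 : Xi μ lam0 0 = (∏ m, (μ m - lam0 0)) / ((I * c) ^ n * (n.factorial : ℂ)) := by
    rw [Xi, hD0]
  have hXn : Xi μ lam0 (Fin.last n) = (∏ m, (μ m - lam0 (Fin.last n))) /
      ((-(I * c)) ^ n * (n.factorial : ℂ)) := by
    rw [Xi, hDn]
  rw [mul_div_assoc I, h1, const_rest c hc lam0 hl0, h3, h2, hX0, hXn, Finset.prod_mul_distrib]
  have p0 := hP 0
  have pn := hP (Fin.last n)
  set P0 := ∏ m, (μ m - lam0 0)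
  set Pn := ∏ m, (μ m - lam0 (Fin.last n))
  set DD := ∏ j, ∏ m ∈ Finset.univ.erase j, (lam0 m - lam0 j)
  set PP := ∏ j, ∏ m, (μ m - lam0 j)
  have hs : (-1 : ℂ) ^ (N * (R - 1)) * (-1) ^ (N * (n + 1)) = 1 := by
    rw [← pow_add, ← hNR]
    obtain ⟨r, rfl⟩ : ∃ r, R = r + 1 := ⟨R - 1, by omega⟩
    apply Even.neg_one_pow
    have : N * (r + 1 - 1) + N * (N + (r + 1)) = N * (N + 1) + 2 * (N * r) := by
      simp; ring
    rw [this]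
    exact (Nat.even_mul_succ_self N).add (even_two_mul _)
  have hcp : c ^ (2 * N) * c ^ (2 * R - 1) = c ^ (2 * n + 1) := by
    rw [← pow_add]; congr 1; omega
  have hfac : ((R - 1).factorial : ℂ) ≠ 0 := by exact_mod_cast (R - 1).factorial_ne_zero
  have hfn : (n.factorial : ℂ) ≠ 0 := by exact_mod_cast n.factorial_ne_zero
  have hI2 : I ^ (2 * n) = (-1) ^ n := by rw [pow_mul, I_sq]
  have hss : ((-1 : ℂ) ^ n) * (-1) ^ n = 1 := by rw [← mul_pow]; simp
  have hIc : (I * c) ^ n * (-(I * c)) ^ n = c ^ (2 * n) := by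
    rw [neg_pow, mul_pow]
    have : I ^ n * c ^ n * ((-1) ^ n * (I ^ n * c ^ n)) = (-1) ^ n * I ^ (2 * n) * c ^ (2 * n) := by
      ring
    rw [this, hI2, hss, one_mul]
  have hcR : c ^ (2 * R - 1) ≠ 0 := pow_ne_zero _ hc
  have hlhs : PP / DD / (P0 / ((I * c) ^ n * (n.factorial : ℂ)) *
      (Pn / ((-(I * c)) ^ n * (n.factorial : ℂ)))) =
      PP / DD * (c ^ (2 * n) * (n.factorial : ℂ) ^ 2) / (P0 * Pn) := by
    rw [← hIc]
    have : (I * c) ^ n ≠ 0 := pow_ne_zero _ (mul_ne_zero I_ne_zero hc)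
    have : (-(I * c)) ^ n ≠ 0 := pow_ne_zero _ (neg_ne_zero.2 (mul_ne_zero I_ne_zero hc))
    field_simp
  rw [hlhs]
  have hcn : c ^ (2 * N) = c ^ (2 * n + 1) / c ^ (2 * R - 1) := by
    rw [eq_div_iff hcR, hcp]
  rw [hcn]
  have expand : (I * sc) ^ R / (c ^ (2 * R - 1) * ((R - 1).factorial : ℂ)) * (-1) ^ (N * (R - 1)) *
      (I * c * (n + 1) * (-1) ^ n * DD) * ((-1) ^ (N * (n + 1)) / PP) *
      (I * (PP / DD * (c ^ (2 * n) * (n.factorial : ℂ) ^ 2) / (P0 * Pn))) =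
      ((-1) ^ (N * (R - 1)) * (-1) ^ (N * (n + 1))) * (I ^ 2) * (-1) ^ n * (PP / PP) * (DD / DD) *
      ((I * sc) ^ R / (c ^ (2 * R - 1) * ((R - 1).factorial : ℂ)) *
        (n + 1) * c ^ (2 * n + 1) * (n.factorial : ℂ) ^ 2 / (P0 * Pn)) := by
    ring
  rw [expand, hs, I_sq, div_self hPp, div_self hDp]
  field_simp
  ring

theorem main_aux {N R n : ℕ} (hR : 1 ≤ R) (hNR : N + R = n + 1) (cb : ℝ) (hcb : 0 < cb)
    (c sc : ℂ) (hcdef : c = -(cb : ℂ)) (μ : Fin N → ℂ)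
    (lp ls : ℂ) (M : ℕ) (hM : M = n + 1)
    (hmu2 : ∀ (k : Fin N) (j : Fin M), μ k ≠ stringRap cb M 0 j) :
    Filter.Tendsto
      (fun δ : Fin M → ℂ => HR c sc R μ (stringRap cb M δ) lp ls)
      (nhdsWithin 0
        {δ : Fin M → ℂ |
          Function.Injective (stringRap cb M δ) ∧
          (∀ k j, μ k ≠ stringRap cb M δ j) ∧
          (∀ j k, stringRap cb M δ j - stringRap cb M δ k + I * c ≠ 0 ∧
            stringRap cb M δ j - stringRap cb M δ k - I * c ≠ 0) ∧
          (∀ j, Vp c μ (stringRap cb M δ) (stringRap cb M δ j) ≠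
            Vm c μ (stringRap cb M δ) (stringRap cb M δ j)) ∧
          Vp c μ (stringRap cb M δ) lp ≠ Vm c μ (stringRap cb M δ) lp ∧
          Vp c μ (stringRap cb M δ) ls ≠ Vm c μ (stringRap cb M δ) ls ∧
          (∀ j, (lp - stringRap cb M δ j) ^ 2 + c ^ 2 ≠ 0) ∧
          (∀ j, (ls - stringRap cb M δ j) ^ 2 + c ^ 2 ≠ 0)})
      (nhds ((-1 : ℂ) ^ (n + 1) * (I * sc) ^ R * c ^ (2 * N) *
        (((n : ℂ) + 1) / ((R - 1).factorial : ℂ)) * ((n.factorial : ℂ)) ^ 2 /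
        ∏ m : Fin N, (μ m ^ 2 + (cb : ℂ) ^ 2 / 4 * (n : ℂ) ^ 2))) := by
  subst hM
  have hcb' : (cb : ℂ) ≠ 0 := by exact_mod_cast hcb.ne'
  have hc : c ≠ 0 := by rw [hcdef]; exact neg_ne_zero.2 hcb'
  set S := {δ : Fin (n + 1) → ℂ |
          Function.Injective (stringRap cb (n + 1) δ) ∧
          (∀ k j, μ k ≠ stringRap cb (n + 1) δ j) ∧
          (∀ j k, stringRap cb (n + 1) δ j - stringRap cb (n + 1) δ k + I * c ≠ 0 ∧
            stringRap cb (n + 1) δ j - stringRap cb (n + 1) δ k - I * c ≠ 0) ∧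
          (∀ j, Vp c μ (stringRap cb (n + 1) δ) (stringRap cb (n + 1) δ j) ≠
            Vm c μ (stringRap cb (n + 1) δ) (stringRap cb (n + 1) δ j)) ∧
          Vp c μ (stringRap cb (n + 1) δ) lp ≠ Vm c μ (stringRap cb (n + 1) δ) lp ∧
          Vp c μ (stringRap cb (n + 1) δ) ls ≠ Vm c μ (stringRap cb (n + 1) δ) ls ∧
          (∀ j, (lp - stringRap cb (n + 1) δ j) ^ 2 + c ^ 2 ≠ 0) ∧
          (∀ j, (ls - stringRap cb (n + 1) δ j) ^ 2 + c ^ 2 ≠ 0)} with hS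
  set lam0 := stringRap cb (n + 1) 0 with hlam0
  have hl0 : ∀ j k, lam0 j - lam0 k = I * c * ((j.val : ℂ) - (k.val : ℂ)) := by
    intro j k
    simp only [hlam0, stringRap, hcdef, Pi.zero_apply]
    ring
  have hinj : Function.Injective lam0 := by
    intro j k h
    have := hl0 j k
    rw [h, sub_self] at this
    have h2 := (mul_eq_zero.1 this.symm).resolve_left (mul_ne_zero I_ne_zero hc)
    exact Fin.ext (by exact_mod_cast sub_eq_zero.1 h2)
  have hl : ∀ j, Filter.Tendsto (fun δ => stringRap cb (n + 1) δ j) (nhdsWithin 0 S)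
      (nhds (lam0 j)) := by
    intro j
    apply Filter.Tendsto.mono_left _ nhdsWithin_le_nhds
    have : Continuous (fun δ : Fin (n + 1) → ℂ => stringRap cb (n + 1) δ j) := by
      unfold stringRap; fun_prop
    exact this.tendsto 0
  have hmem : ∀ᶠ δ in nhdsWithin 0 S, δ ∈ S := self_mem_nhdsWithin
  have hval := const_eval hR hNR c hc μ lam0 hinj hl0 hmu2 sc
  have hprod : ∏ m : Fin N, (μ m ^ 2 + (cb : ℂ) ^ 2 / 4 * (n : ℂ) ^ 2) =
      ∏ m : Fin N, ((μ m - lam0 0) * (μ m - lam0 (Fin.last n))) := by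
    refine Finset.prod_congr rfl fun m _ => ?_
    simp only [hlam0, stringRap, Pi.zero_apply, Fin.val_last, Fin.val_zero]
    push_cast
    linear_combination (cb ^ 2 / 4 * n ^ 2 : ℂ) * I_sq
  rw [hprod, ← hval]
  have hlim := tendsto_Dcut c hc μ (fun δ => stringRap cb (n + 1) δ) lam0 hinj hl0 hl
    (hmem.mono fun δ h => h.2.2.1)
  have hXi := tendsto_Xi μ (fun δ => stringRap cb (n + 1) δ) lam0 hinj hl
  have hXne : ∏ j, Xi μ lam0 j ≠ 0 := by
    rw [Finset.prod_ne_zero_iff]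
    intro j _
    apply div_ne_zero <;> rw [Finset.prod_ne_zero_iff] <;> intro m hm
    · exact sub_ne_zero.2 (hmu2 m j)
    · exact sub_ne_zero.2 (fun h => (Finset.mem_erase.1 hm).1 (hinj h))
  have hrest : Filter.Tendsto (fun δ => Rest c (stringRap cb (n + 1) δ)) (nhdsWithin 0 S)
      (nhds (Rest c lam0)) := by
    unfold Rest
    refine tendsto_finsetProd _ fun j _ => tendsto_finsetProd _ fun k _ => ?_
    split_ifs
    · exact tendsto_const_nhds
    · exact ((hl j).sub (hl k)).add_const _
  have hmul : Filter.Tendsto (fun δ => ∏ j, ∏ k, (stringRap cb (n + 1) δ j - μ k)⁻¹)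
      (nhdsWithin 0 S) (nhds (∏ j, ∏ k, (lam0 j - μ k)⁻¹)) := by
    refine tendsto_finsetProd _ fun j _ => tendsto_finsetProd _ fun k _ => ?_
    exact ((hl j).sub_const _).inv₀ (sub_ne_zero.2 (hmu2 k j).symm)
  have htot := ((hrest.const_mul ((I * sc) ^ R / (c ^ (2 * R - 1) * ((R - 1).factorial : ℂ)) *
    (-1 : ℂ) ^ (N * (R - 1)))).mul hmul).mul
    ((hlim.const_mul I).div (tendsto_finsetProd Finset.univ fun j _ => hXi j) hXne)
  refine htot.congr' ?_
  filter_upwards [hmem] with δ h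
  obtain ⟨a1, a2, a3, a4, a5, a6, a7, a8⟩ := h
  exact (exactH (by omega) c sc R μ _ lp ls a1 a2 a3 a4 a5 a6 a7 a8).symm

/-- Attractive-regime (vanishing string deviation) limit of the determinant formula `H_R`
for the form factor of `Ψ^R(0)` between the `M`-string ground state (`M = N+R`,
`c = −c̄ < 0`, `√c = i√c̄`) and a state with rapidities `μ₁,…,μ_N`. -/
theorem HR_string_limit {N R : ℕ} (hR : 1 ≤ R) (cb : ℝ) (hcb : 0 < cb)
    (c sc : ℂ) (hcdef : c = -(cb : ℂ)) (hscdef : sc = I * (Real.sqrt cb : ℂ))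
    (μ : Fin N → ℂ)
    (hmu1 : ∀ m : Fin N,
      μ m ^ 2 + (cb : ℂ) ^ 2 / 4 * ((N + R : ℂ) - 1) ^ 2 ≠ 0)
    (hmu2 : ∀ (k : Fin N) (j : Fin (N + R)), μ k ≠ stringRap cb (N + R) 0 j)
    (lp ls : ℂ)
    (hp1 : ∀ j, (lp - stringRap cb (N + R) 0 j) ^ 2 + c ^ 2 ≠ 0)
    (hs1 : ∀ j, (ls - stringRap cb (N + R) 0 j) ^ 2 + c ^ 2 ≠ 0) :
    Filter.Tendsto
      (fun δ : Fin (N + R) → ℂ => HR c sc R μ (stringRap cb (N + R) δ) lp ls)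
      (nhdsWithin 0
        {δ : Fin (N + R) → ℂ |
          Function.Injective (stringRap cb (N + R) δ) ∧
          (∀ k j, μ k ≠ stringRap cb (N + R) δ j) ∧
          (∀ j k, stringRap cb (N + R) δ j - stringRap cb (N + R) δ k + I * c ≠ 0 ∧
            stringRap cb (N + R) δ j - stringRap cb (N + R) δ k - I * c ≠ 0) ∧
          (∀ j, Vp c μ (stringRap cb (N + R) δ) (stringRap cb (N + R) δ j) ≠
            Vm c μ (stringRap cb (N + R) δ) (stringRap cb (N + R) δ j)) ∧
          Vp c μ (stringRap cb (N + R) δ) lp ≠ Vm c μ (stringRap cb (N + R) δ) lp ∧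
          Vp c μ (stringRap cb (N + R) δ) ls ≠ Vm c μ (stringRap cb (N + R) δ) ls ∧
          (∀ j, (lp - stringRap cb (N + R) δ j) ^ 2 + c ^ 2 ≠ 0) ∧
          (∀ j, (ls - stringRap cb (N + R) δ j) ^ 2 + c ^ 2 ≠ 0)})
      (nhds ((-1 : ℂ) ^ (N + R) * (I * sc) ^ R * c ^ (2 * N) *
        ((N + R : ℂ) / ((R - 1).factorial : ℂ)) * (((N + R - 1).factorial : ℂ)) ^ 2 /
        ∏ m : Fin N, (μ m ^ 2 + (cb : ℂ) ^ 2 / 4 * ((N + R : ℂ) - 1) ^ 2))) := by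
  obtain ⟨n, hn⟩ : ∃ n, N + R = n + 1 := ⟨N + R - 1, by omega⟩
  have h := main_aux hR hn cb hcb c sc hcdef μ lp ls (N + R) hn hmu2
  have hn' : (N + R : ℂ) = n + 1 := by exact_mod_cast hn
  have hn2 : N + R - 1 = n := by omega
  have hpow : (-1 : ℂ) ^ (N + R) = (-1) ^ (n + 1) := by rw [hn]
  rw [hn', hn2, hpow, add_sub_cancel_right]
  exact h
end
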